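/- arXiv:math/0010260 — 3 statements merged into one kernel-verified Lean document; each statement's English description precedes it below -/
import Mathlib

section
/- Suppose β' : ℕ × ℕ → ℕ is such that for every prime p and every n×n m-sparse polynomial system H over ℂ_p, the number of isolated roots z = (z_1,…,z_n) ∈ ℂ_p^n of H satisfying |z_i − 1|_p ≤ 1/p for all i is at most β'(n,m). Then for every prime p, every degree-d algebraic extension L of ℚ_p with residue field degree f_L, every n×n m-sparse polynomial system G over L, and every fixed vector v ∈ ℝ^n, the number of isolated roots x = (x_1,…,x_n) of G in (L^*)^n with (ord_p x_1,…,ord_p x_n) = v is at most p^{dn}·(1 − 1/p^{f_L})^n·β'(n,m). -/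
/-!
Write `|x|` for the absolute value on `L` induced from `ℂ_p`, `O` for its valuation ring and `ϖ` for
an element with `|ϖ| = p ^ (-1/e)`.

Fix one root `ζ₀` with valuation vector `v`. Every other such root `ζ` has all ratios `ζ i / ζ₀ i`
in `O*`. The units of `O` fall into at most `p ^ d * (1 - p ^ (-f))` classes modulo `pO`
(`exists_unit_representatives`); hence the roots are distributed over the `n`-th power of that many
boxes `|ζ i / (ζ₀ i * c i) - 1| ≤ 1/p` with `c` a tuple of unit representatives. Substituting
`x i = ζ₀ i * c i * y i` changes neither the supports of the polynomials nor isolatedness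
(`isSparseSystem_scale`, `isIsolatedRoot_scalePoly`), so the assumed bound at `(1, …, 1)` allows at
most `β' (n, m)` roots per box.

The count of unit classes rests on `|O / pO| ≤ p ^ d` (`finite_card_quotient_le`) and on
`|O / ϖᵉO| = |O / ϖO| ^ e` (`relIndex_normBall_pow`).
-/

open MvPolynomial Filter Topology

/-- The zero set in `F^n` of a `k`-tuple of `n`-variate polynomials. -/
def zeroSet {F : Type*} [CommSemiring F] {k n : ℕ}
    (G : Fin k → MvPolynomial (Fin n) F) : Set (Fin n → F) :=
  {x | ∀ i, MvPolynomial.eval x (G i) = 0}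

/-- `ζ` is an isolated root of the system `G`: it is a root, and an isolated point of the
zero set of `G` in the metric topology. -/
def IsIsolatedRoot {F : Type*} [NormedField F] {k n : ℕ}
    (G : Fin k → MvPolynomial (Fin n) F) (ζ : Fin n → F) : Prop :=
  ζ ∈ zeroSet G ∧ 𝓝[zeroSet G \ {ζ}] ζ = ⊥

/-- A `k × n` `m`-sparse polynomial system: all the `gᵢ` are nonzero and the union of their
supports has exactly `m` elements. -/
def IsSparseSystem {F : Type*} [CommSemiring F] {k n : ℕ}
    (G : Fin k → MvPolynomial (Fin n) F) (m : ℕ) : Prop :=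
  (∀ i, G i ≠ 0) ∧ (Finset.univ.biUnion fun i => (G i).support).card = m

/-- The property that `β' : ℕ × ℕ → ℕ` bounds (independently of the prime `p`) the number of
isolated roots `x ∈ ℂ_pⁿ` of an `n × n` `m`-sparse polynomial system over `ℂ_p` satisfying
`|xᵢ - 1|_p ≤ 1/p` for all `i`.  Here `Cp` ranges over all fields satisfying the
characterizing axioms of `ℂ_p`. -/
def LipshitzBound (β' : ℕ × ℕ → ℕ) : Prop :=
  ∀ (p : ℕ) (_ : Fact p.Prime)
    (Cp : Type) (_ : NormedField Cp) (_ : IsUltrametricDist Cp)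
    (_ : CompleteSpace Cp) (_ : IsAlgClosed Cp) (_ : Algebra ℚ_[p] Cp)
    (_ : Isometry (algebraMap ℚ_[p] Cp))
    (_ : Dense {x : Cp | IsAlgebraic ℚ_[p] x})
    (n m : ℕ) (G : Fin n → MvPolynomial (Fin n) Cp), IsSparseSystem G m →
      {x : Fin n → Cp | IsIsolatedRoot G x ∧ ∀ i, ‖x i - 1‖ ≤ 1 / (p : ℝ)}.Finite ∧
      ({x : Fin n → Cp | IsIsolatedRoot G x ∧ ∀ i, ‖x i - 1‖ ≤ 1 / (p : ℝ)}.ncard : ℝ) ≤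
        β' (n, m)



/-- The `p`-adic valuation `ord_p x = -log_p |x|_p` of a nonzero element of a normed field. -/
noncomputable def ordp (p : ℕ) {F : Type*} [NormedField F] (x : F) : ℝ :=
  -Real.logb p ‖x‖


/-! ### Fractional ideals of the valuation ring -/

/-- The additive subgroup `{x : L | |x| ≤ |c|}` of `L`, where `|x| = ‖φ x‖` is the absolute value
pulled back along `φ : L →+* K`. So `normBall φ 1` is the valuation ring `O` of `L` and, in general,
`normBall φ c` is the fractional ideal `c O`. -/
def normBall {L K : Type*} [Field L] [NormedField K] [IsUltrametricDist K] (φ : L →+* K) (c : L) :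
    AddSubgroup L where
  carrier := {x | ‖φ x‖ ≤ ‖φ c‖}
  zero_mem' := by simp
  add_mem' := by
    intro a b ha hb
    simp only [Set.mem_ofPred_eq, map_add] at *
    exact (IsUltrametricDist.norm_add_le_max _ _).trans (max_le ha hb)
  neg_mem' := by
    intro a ha
    simpa using ha

section
variable {L K : Type*} [Field L] [NormedField K] [IsUltrametricDist K] (φ : L →+* K)

lemma mem_normBall {c x : L} : x ∈ normBall φ c ↔ ‖φ x‖ ≤ ‖φ c‖ := Iff.rfl

lemma normBall_congr {c c' : L} (h : ‖φ c‖ = ‖φ c'‖) : normBall φ c = normBall φ c' := by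
  ext x; simp [mem_normBall, h]

lemma map_mul_normBall {c : L} (hc : c ≠ 0) (a : L) :
    (normBall φ a).map (AddMonoidHom.mulLeft c) = normBall φ (c * a) := by
  have hc' : 0 < ‖φ c‖ := by simpa using hc
  ext x
  simp only [AddSubgroup.mem_map, AddMonoidHom.coe_mulLeft, mem_normBall]
  constructor
  · rintro ⟨y, hy, rfl⟩
    simpa [hc'] using hy
  · intro hx
    refine ⟨c⁻¹ * x, ?_, by field_simp⟩
    simp only [map_mul, norm_mul, map_inv₀, norm_inv] at hx ⊢
    rwa [inv_mul_le_iff₀ hc']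

/-- `[O : cʲO] = [O : cO]ʲ`, since multiplication by `cʲ` identifies `O / cO` with
`cʲO / cʲ⁺¹O`. -/
lemma relIndex_normBall_pow {c : L} (hc : c ≠ 0) (hc1 : ‖φ c‖ ≤ 1) (j : ℕ) :
    (normBall φ (c ^ j)).relIndex (normBall φ 1) =
      ((normBall φ c).relIndex (normBall φ 1)) ^ j := by
  induction j with
  | zero => simp
  | succ j ih =>
    have h1 : (normBall φ (c ^ j * c)).relIndex (normBall φ (c ^ j)) =
        (normBall φ c).relIndex (normBall φ 1) := by
      rw [← map_mul_normBall φ (pow_ne_zero j hc) c]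
      nth_rewrite 2 [← mul_one (c ^ j)]
      rw [← map_mul_normBall φ (pow_ne_zero j hc) 1]
      apply AddSubgroup.relIndex_map_map_of_injective
      intro x y hxy
      simpa [hc] using hxy
    rw [pow_succ, pow_succ, mul_comm _ (AddSubgroup.relIndex _ _), ← ih, ← h1]
    symm
    apply AddSubgroup.relIndex_mul_relIndex
    · intro x hx
      rw [mem_normBall] at *
      refine hx.trans ?_
      rw [map_mul, norm_mul]
      exact mul_le_of_le_one_right (norm_nonneg _) hc1
    · intro x hx
      rw [mem_normBall] at *
      refine hx.trans ?_
      simpa using pow_le_one₀ (norm_nonneg _) hc1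

end

lemma finite_card_le_of_rank_le (p : ℕ) [Fact p.Prime] {V : Type*} [AddCommGroup V]
    [Module (ZMod p) V] {n : ℕ} (h : Module.rank (ZMod p) V ≤ n) :
    Finite V ∧ Nat.card V ≤ p ^ n := by
  have hfin : Module.Finite (ZMod p) V :=
    Module.rank_lt_aleph0_iff.1 (h.trans_lt Cardinal.natCast_lt_aleph0)
  refine ⟨Module.finite_of_finite (ZMod p), ?_⟩
  rw [Module.natCard_eq_pow_finrank (K := ZMod p), Nat.card_zmod]
  exact Nat.pow_le_pow_right (Fact.out : p.Prime).pos (Module.finrank_le_of_rank_le h)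

/-- `O / pO` is finite with at most `p ^ [L : ℚ_p]` elements: lifts to `O` of `𝔽_p`-independent
classes are independent over `ℚ_p`. -/
lemma finite_card_quotient_le (p : ℕ) [Fact p.Prime] {L K : Type*} [Field L] [NormedField K]
    [IsUltrametricDist K] [Algebra ℚ_[p] L] [FiniteDimensional ℚ_[p] L] (φ : L →+* K)
    (hφ : ∀ x : ℚ_[p], ‖φ (algebraMap ℚ_[p] L x)‖ = ‖x‖) :
    Finite (normBall φ 1 ⧸ (normBall φ (p : L)).addSubgroupOf (normBall φ 1)) ∧
      (normBall φ (p : L)).relIndex (normBall φ 1) ≤ p ^ Module.finrank ℚ_[p] L := by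
  have hp : ‖φ (p : L)‖ = (p : ℝ)⁻¹ := by
    have := hφ p
    simpa using this
  let _ : Module (ZMod p) (normBall φ 1 ⧸ (normBall φ (p : L)).addSubgroupOf (normBall φ 1)) :=
    QuotientAddGroup.zmodModule (by
      rintro ⟨x, hx⟩
      rw [mem_normBall] at hx
      simp only [AddSubgroup.mem_addSubgroupOf, AddSubgroup.coe_nsmul, mem_normBall, nsmul_eq_mul,
        map_mul, norm_mul]
      exact mul_le_of_le_one_right (norm_nonneg _) (by simpa using hx))
  have hrank : Module.rank (ZMod p)
      (normBall φ 1 ⧸ (normBall φ (p : L)).addSubgroupOf (normBall φ 1)) ≤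
      (Module.finrank ℚ_[p] L : ℕ) := by
    apply rank_le
    intro s hs
    rw [Fintype.linearIndependent_iff] at hs
    let b : s → normBall φ 1 := fun i => Quotient.out i.1
    have hb (i : s) : (QuotientAddGroup.mk (b i) :
      normBall φ 1 ⧸ (normBall φ (p : L)).addSubgroupOf (normBall φ 1)) = i.1 := Quotient.out_eq _
    have hli : LinearIndependent ℚ_[p] (fun i => (b i : L)) := by
      rw [Fintype.linearIndependent_iff]
      by_contra! hcon
      obtain ⟨g, hg, i0, hi0⟩ := hcon
      have : Nonempty s := ⟨i0⟩
      -- Dividing a relation by a coefficient of maximal norm gives one over `ℤ_p` with a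
      -- coefficient equal to `1`, whose reduction modulo `p` is nontrivial.
      obtain ⟨i1, hi1⟩ := Finite.exists_max (fun i => ‖g i‖)
      have hpos : 0 < ‖g i1‖ := (norm_pos_iff.2 hi0).trans_le (hi1 i0)
      have hne : g i1 ≠ 0 := norm_pos_iff.1 hpos
      have hc (i : s) : ‖g i / g i1‖ ≤ 1 := by
        rw [norm_div]; exact div_le_one_of_le₀ (hi1 i) hpos.le
      let c : s → ℤ_[p] := fun i => ⟨g i / g i1, hc i⟩
      have hcs : ∑ i, (c i : ℚ_[p]) • (b i : L) = 0 := by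
        have : ∑ i, (c i : ℚ_[p]) • (b i : L) = (g i1)⁻¹ • ∑ i, g i • (b i : L) := by
          rw [Finset.smul_sum]
          refine Finset.sum_congr rfl fun i _ => ?_
          rw [smul_smul]
          congr 1
          simp only [c]
          rw [div_eq_inv_mul]
        rw [this, hg, smul_zero]
      have hdiff (i : s) : ‖((c i).zmodRepr : ℚ_[p]) - (c i : ℚ_[p])‖ ≤ (p : ℝ)⁻¹ := by
        have h := PadicInt.norm_sub_zmodRepr_lt_one (c i)
        have h2 := (PadicInt.norm_le_pow_iff_norm_lt_pow_add_one
          (c i - ((c i).zmodRepr : ℤ_[p])) (-1)).2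
          (by simpa using h)
        rw [norm_sub_rev]
        rw [PadicInt.norm_def] at h2
        simpa using h2
      have hmem : (∑ i, (c i).zmodRepr • b i) ∈
          (normBall φ (p : L)).addSubgroupOf (normBall φ 1) := by
        rw [AddSubgroup.mem_addSubgroupOf, mem_normBall, hp]
        have : ((∑ i, (c i).zmodRepr • b i : normBall φ 1) : L) =
            ∑ i, (((c i).zmodRepr : ℚ_[p]) - (c i : ℚ_[p])) • (b i : L) := by
          simp only [sub_smul, Finset.sum_sub_distrib, hcs, sub_zero]
          simp [Nat.cast_smul_eq_nsmul]
        rw [this, map_sum]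
        refine IsUltrametricDist.norm_sum_le_of_forall_le_of_nonneg (by positivity) fun i _ => ?_
        rw [Algebra.smul_def, map_mul, norm_mul, hφ]
        have hbi : ‖φ (b i : L)‖ ≤ 1 := by
          have := (mem_normBall φ).1 (b i).2
          simpa using this
        calc _ ≤ (p : ℝ)⁻¹ * 1 := mul_le_mul (hdiff i) hbi (norm_nonneg _) (by positivity)
          _ = _ := mul_one _
      have hz := hs (fun i => ((c i).zmodRepr : ZMod p)) (by
        rw [← QuotientAddGroup.eq_zero_iff] at hmem
        rw [← hmem, QuotientAddGroup.mk_sum]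
        refine Finset.sum_congr rfl fun i _ => ?_
        rw [QuotientAddGroup.mk_nsmul, hb, Nat.cast_smul_eq_nsmul]) i1
      have h0 : (c i1).zmodRepr = 0 :=
        Nat.eq_zero_of_dvd_of_lt ((ZMod.natCast_eq_zero_iff _ _).1 hz) (PadicInt.zmodRepr_lt_p _)
      have h1 := PadicInt.norm_sub_zmodRepr_lt_one (c i1)
      rw [h0] at h1
      have hc1 : c i1 = 1 := Subtype.ext (div_self hne)
      simp [hc1] at h1
    simpa using hli.fintype_card_le_finrank
  exact finite_card_le_of_rank_le p hrank

/-- The units of `O` are covered by `p ^ (ef) * (1 - p ^ (-f))` cosets of `pO` with unit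
representatives. Let `q = [O : ϖO]`. Since `|ϖᵉ| = |p|`, one has `|O / pO| = q ^ e`, and unit classes
avoid the subgroup `ϖO / pO` of order `q ^ (e - 1)`, so there are at most `q ^ (e - 1) * (q - 1)` of
them; moreover `q ≤ p ^ f` because `q ^ e ≤ p ^ (ef)`. -/
lemma exists_unit_representatives (p : ℕ) [Fact p.Prime] {L K : Type*} [Field L] [NormedField K]
    [IsUltrametricDist K] [Algebra ℚ_[p] L] [FiniteDimensional ℚ_[p] L] (φ : L →+* K)
    (hφ : ∀ x : ℚ_[p], ‖φ (algebraMap ℚ_[p] L x)‖ = ‖x‖) (e f : ℕ) (he : 0 < e)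
    (hef : e * f = Module.finrank ℚ_[p] L) (ϖ : L) (hϖ : ‖φ ϖ‖ ^ e = (p : ℝ)⁻¹) :
    ∃ C : Finset L, (∀ c ∈ C, ‖φ c‖ = 1) ∧
      (C.card : ℝ) ≤ (p : ℝ) ^ (e * f) * (1 - 1 / (p : ℝ) ^ f) ∧
      ∀ x : L, ‖φ x‖ = 1 → ∃ c ∈ C, ‖φ (x - c)‖ ≤ 1 / (p : ℝ) := by
  classical
  have hp1 : 1 < (p : ℝ) := by exact_mod_cast (Fact.out : p.Prime).one_lt
  have hp : ‖φ (p : L)‖ = (p : ℝ)⁻¹ := by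
    have := hφ p
    simpa using this
  have hϖ1 : ‖φ ϖ‖ < 1 := by
    by_contra! h
    have := one_le_pow₀ h (n := e)
    rw [hϖ] at this
    exact absurd (inv_lt_one_of_one_lt₀ hp1) (not_lt.2 this)
  have hϖ0 : ϖ ≠ 0 := by
    rintro rfl
    rw [map_zero, norm_zero, zero_pow he.ne'] at hϖ
    have : (0 : ℝ) < (p : ℝ)⁻¹ := by positivity
    exact this.ne hϖ
  obtain ⟨hfin, hcard⟩ := finite_card_quotient_le p φ hφ
  let N := (normBall φ (p : L)).addSubgroupOf (normBall φ 1)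
  let q := (normBall φ ϖ).relIndex (normBall φ 1)
  have hq : Nat.card (normBall φ 1 ⧸ N) = q ^ e := by
    rw [← relIndex_normBall_pow φ hϖ0 hϖ1.le, normBall_congr φ (c := ϖ ^ e) (c' := p)]
    · rfl
    · rw [map_pow, norm_pow, hϖ, hp]
  have hqpos : 0 < q := by
    have : 0 < Nat.card (normBall φ 1 ⧸ N) := Nat.card_pos
    rw [hq] at this
    exact Nat.pos_of_ne_zero fun h => by simp [h, he.ne'] at this
  have hqf : q ≤ p ^ f := by
    have h : q ^ e ≤ (p ^ f) ^ e := by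
      rw [← hq, ← pow_mul, mul_comm, hef]; exact hcard
    exact (Nat.pow_le_pow_iff_left he.ne').1 h
  -- `H = ϖO / pO`
  let H : AddSubgroup (normBall φ 1 ⧸ N) :=
    ((normBall φ ϖ).addSubgroupOf (normBall φ 1)).map (QuotientAddGroup.mk' N)
  have hNle : ‖φ (p : L)‖ ≤ ‖φ ϖ‖ := by
    rw [hp, ← hϖ]
    exact pow_le_of_le_one (norm_nonneg _) hϖ1.le he.ne'
  have hHindex : H.index = q := by
    refine AddSubgroup.index_map_eq _ (QuotientAddGroup.mk'_surjective N) ?_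
    rw [QuotientAddGroup.ker_mk']
    intro x hx
    exact le_trans hx hNle
  have hHcard : Nat.card H = q ^ (e - 1) := by
    have := H.card_mul_index
    rw [hHindex, hq] at this
    obtain ⟨k, rfl⟩ : ∃ k, e = k + 1 := ⟨e - 1, by omega⟩
    rw [pow_succ] at this
    simpa using Nat.eq_of_mul_eq_mul_right hqpos this
  -- the classes of units
  let U : Set (normBall φ 1 ⧸ N) := {y | ∃ x : normBall φ 1, ‖φ (x : L)‖ = 1 ∧ (x : _ ⧸ N) = y}
  have hUH : Disjoint U (H : Set (normBall φ 1 ⧸ N)) := by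
    rw [Set.disjoint_left]
    rintro _ ⟨x, hx, rfl⟩ ⟨z, hz, hzx⟩
    rw [QuotientAddGroup.mk'_apply, QuotientAddGroup.eq] at hzx
    have h1 : ‖φ (-(z : L) + x)‖ ≤ ‖φ ϖ‖ := le_trans hzx hNle
    have h2 : (x : L) ∈ normBall φ ϖ := by
      have := (normBall φ ϖ).add_mem hz h1
      simpa using this
    rw [mem_normBall, hx] at h2
    exact absurd h2 (not_le.2 hϖ1)
  have hUcard : U.ncard + q ^ (e - 1) ≤ q ^ e := by
    rw [← hHcard, ← hq, ← Nat.card_coe_set_eq U]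
    have := Set.ncard_union_eq hUH (Set.toFinite _) (Set.toFinite _)
    rw [← Nat.card_coe_set_eq U, ← Nat.card_coe_set_eq (H : Set (normBall φ 1 ⧸ N))] at this
    refine this.symm.le.trans ?_
    exact Set.ncard_le_card _
  have hrep : ∀ y : U, ∃ x : normBall φ 1, ‖φ (x : L)‖ = 1 ∧ (x : _ ⧸ N) = y.1 := fun y => y.2
  choose r hr1 hr2 using hrep
  have : Fintype U := Fintype.ofFinite U
  refine ⟨Finset.univ.image fun y : U => (r y : L), ?_, ?_, ?_⟩
  · intro c hc
    obtain ⟨y, -, rfl⟩ := Finset.mem_image.1 hc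
    exact hr1 y
  · have h1 : ((Finset.univ.image fun y : U => (r y : L)).card : ℝ) ≤ U.ncard := by
      have : (Finset.univ.image fun y : U => (r y : L)).card ≤ U.ncard := by
        refine Finset.card_image_le.trans ?_
        rw [Finset.card_univ, ← Nat.card_eq_fintype_card, Nat.card_coe_set_eq]
      exact_mod_cast this
    obtain ⟨k, rfl⟩ : ∃ k, e = k + 1 := ⟨e - 1, by omega⟩
    have h2 : (U.ncard : ℝ) ≤ (q : ℝ) ^ k * (q - 1) := by
      have : (U.ncard : ℝ) + (q : ℝ) ^ k ≤ (q : ℝ) ^ (k + 1) := by exact_mod_cast hUcard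
      rw [pow_succ] at this
      linarith
    have hqf' : (q : ℝ) ≤ (p : ℝ) ^ f := by exact_mod_cast hqf
    have hq1 : (1 : ℝ) ≤ q := by exact_mod_cast hqpos
    calc _ ≤ (q : ℝ) ^ k * (q - 1) := h1.trans h2
      _ ≤ ((p : ℝ) ^ f) ^ k * ((p : ℝ) ^ f - 1) := by gcongr
      _ = _ := by
        have : (p : ℝ) ^ f ≠ 0 := by positivity
        rw [mul_comm (k + 1) f, pow_mul, pow_succ]
        field_simp
  · intro x hx
    have hxm : x ∈ normBall φ 1 := by rw [mem_normBall]; simp [hx]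
    let y : U := ⟨((⟨x, hxm⟩ : normBall φ 1) : _ ⧸ N), ⟨x, hxm⟩, hx, rfl⟩
    refine ⟨r y, Finset.mem_image_of_mem _ (Finset.mem_univ y), ?_⟩
    have h := hr2 y
    rw [QuotientAddGroup.eq] at h
    have h' : ‖φ (-(r y : L) + x)‖ ≤ ‖φ (p : L)‖ := h
    rw [hp] at h'
    rw [sub_eq_neg_add, one_div]
    exact h'

/-! ### Rescaling the variables -/

/-- The polynomial `P(a₁x₁, …, aₙxₙ)`. -/
noncomputable def scalePoly {F : Type*} [CommSemiring F] {n : ℕ} (a : Fin n → F)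
    (P : MvPolynomial (Fin n) F) : MvPolynomial (Fin n) F :=
  bind₁ (fun i => C (a i) * X i) P

lemma eval_scalePoly {F : Type*} [CommSemiring F] {n : ℕ} (a y : Fin n → F)
    (P : MvPolynomial (Fin n) F) : eval y (scalePoly a P) = eval (fun i => a i * y i) P := by
  rw [scalePoly, ← coe_aeval_eq_eval, ← coe_aeval_eq_eval]
  simp only [RingHom.coe_coe, aeval_bind₁]
  congr 1
  ext i
  simp

lemma coeff_scalePoly {F : Type*} [CommSemiring F] {n : ℕ} (a : Fin n → F)
    (P : MvPolynomial (Fin n) F) (s : Fin n →₀ ℕ) :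
    coeff s (scalePoly a P) = coeff s P * ∏ i, a i ^ s i := by
  classical
  induction P using MvPolynomial.induction_on' with
  | monomial u c =>
    have : scalePoly a (monomial u c) = monomial u (c * ∏ i, a i ^ u i) := by
      rw [scalePoly, bind₁_monomial,
        Finset.prod_subset (Finset.subset_univ u.support) (by
          intro i _ hi
          rw [Finsupp.notMem_support_iff.1 hi, pow_zero])]
      simp only [mul_pow, Finset.prod_mul_distrib]
      rw [monomial_eq (s := u), Finsupp.prod_fintype _ _ (by simp)]
      simp [mul_assoc]
    rw [this, coeff_monomial, coeff_monomial]
    split_ifs with h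
    · rw [h]
    · simp
  | add P Q hP hQ =>
    have : scalePoly a (P + Q) = scalePoly a P + scalePoly a Q := map_add _ _ _
    rw [this, coeff_add, coeff_add, hP, hQ, add_mul]

lemma support_scalePoly {F : Type*} [Field F] {n : ℕ} {a : Fin n → F} (ha : ∀ i, a i ≠ 0)
    (P : MvPolynomial (Fin n) F) : (scalePoly a P).support = P.support := by
  ext s
  have : ∏ i, a i ^ s i ≠ 0 := Finset.prod_ne_zero_iff.2 fun i _ => pow_ne_zero _ (ha i)
  simp [mem_support_iff, coeff_scalePoly, this]

lemma isIsolatedRoot_scalePoly {F : Type*} [NormedField F] {k n : ℕ} {a : Fin n → F}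
    (ha : ∀ i, a i ≠ 0) {G : Fin k → MvPolynomial (Fin n) F} {y : Fin n → F}
    (h : IsIsolatedRoot G (fun i => a i * y i)) :
    IsIsolatedRoot (fun i => scalePoly a (G i)) y := by
  refine ⟨fun i => by rw [eval_scalePoly]; exact h.1 i, ?_⟩
  have h2 := h.2
  rw [← notMem_closure_iff_nhdsWithin_eq_bot] at h2 ⊢
  refine fun hy => h2 ?_
  refine map_mem_closure (f := fun z : Fin n → F => fun i => a i * z i) (by fun_prop) hy ?_
  rintro z ⟨hz, hzy⟩
  refine ⟨fun i => by rw [← eval_scalePoly]; exact hz i, fun heq => hzy ?_⟩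
  funext i
  exact mul_left_cancel₀ (ha i) (congrFun heq i)

lemma isSparseSystem_scale {L K : Type*} [Field L] [Field K] (φ : L →+* K) {k n m : ℕ}
    {a : Fin n → K} (ha : ∀ i, a i ≠ 0) {G : Fin k → MvPolynomial (Fin n) L}
    (hG : IsSparseSystem G m) :
    IsSparseSystem (fun i => scalePoly a ((G i).map φ)) m := by
  have hs (i : Fin k) : (scalePoly a ((G i).map φ)).support = (G i).support := by
    rw [support_scalePoly ha, support_map_of_injective _ φ.injective]
  refine ⟨fun i h0 => hG.1 i ?_, ?_⟩
  · rw [← support_eq_empty, ← hs]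
    exact support_eq_empty.2 h0
  · simp only [hs]
    exact hG.2

/-! ### Counting roots with a fixed valuation vector -/

/-- **Key step in the proof of Theorem 1.** If `β'(n,m)` bounds the number of isolated roots
of `n × n` `m`-sparse systems over `ℂ_p` that are `p`-adically close to `(1,…,1)` (Lipshitz's
Theorem), then for any fixed `v ∈ ℝⁿ`, any `n × n` `m`-sparse system over a degree-`d`
extension `L` of `ℚ_p` has at most `p^{dn}·(1 - 1/p^{f_L})^n·β'(n,m)` isolated roots
`x ∈ (L*)ⁿ` with valuation vector `(ord_p x₁, …, ord_p xₙ) = v`. -/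
theorem fixed_valuation_bound_from_lipshitz (β' : ℕ × ℕ → ℕ) (hβ' : LipshitzBound β') :
    ∀ (p : ℕ) (_ : Fact p.Prime) (d : ℕ) (_ : 0 < d)
      (Cp : Type) (_ : NormedField Cp) (_ : IsUltrametricDist Cp)
      (_ : CompleteSpace Cp) (_ : IsAlgClosed Cp) (_ : Algebra ℚ_[p] Cp)
      (_ : Isometry (algebraMap ℚ_[p] Cp))
      (_ : Dense {x : Cp | IsAlgebraic ℚ_[p] x})
      (L : Type) (_ : Field L) (_ : Algebra ℚ_[p] L) (_ : Algebra L Cp)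
      (_ : IsScalarTower ℚ_[p] L Cp) (_ : FiniteDimensional ℚ_[p] L)
      (_ : Module.finrank ℚ_[p] L = d)
      (eL fL : ℕ) (_ : 0 < eL) (_ : eL * fL = d)
      (_ : ∀ x : L, x ≠ 0 → ∃ j : ℤ, ‖algebraMap L Cp x‖ = (p : ℝ) ^ ((j : ℝ) / (eL : ℝ)))
      (_ : ∃ x : L, x ≠ 0 ∧ ‖algebraMap L Cp x‖ = (p : ℝ) ^ (-(1 : ℝ) / (eL : ℝ)))
      (n m : ℕ) (G : Fin n → MvPolynomial (Fin n) L), IsSparseSystem G m →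
      ∀ v : Fin n → ℝ,
        {ζ : Fin n → L | (∀ i, ζ i ≠ 0) ∧
            IsIsolatedRoot (fun i => (G i).map (algebraMap L Cp))
              (fun j => algebraMap L Cp (ζ j)) ∧
            ∀ i, ordp p (algebraMap L Cp (ζ i)) = v i}.Finite ∧
        ({ζ : Fin n → L | (∀ i, ζ i ≠ 0) ∧
            IsIsolatedRoot (fun i => (G i).map (algebraMap L Cp))
              (fun j => algebraMap L Cp (ζ j)) ∧
            ∀ i, ordp p (algebraMap L Cp (ζ i)) = v i}.ncard : ℝ) ≤
          (p : ℝ) ^ (d * n) * (1 - 1 / (p : ℝ) ^ fL) ^ n * β' (n, m) := by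
  intro p _ d _ Cp _ _ _ _ _ hiso hdense L _ _ _ _ _ hd eL fL heL hef _ hϖ n m G hG v
  classical
  set φ : L →+* Cp := algebraMap L Cp with hφdef
  have hφ (x : ℚ_[p]) : ‖φ (algebraMap ℚ_[p] L x)‖ = ‖x‖ := by
    rw [hφdef, ← IsScalarTower.algebraMap_apply]
    exact hiso.norm_map_of_map_zero (map_zero _) x
  obtain ⟨ϖ, -, hϖ⟩ := hϖ
  have hp1 : 1 < (p : ℝ) := by exact_mod_cast (Fact.out : p.Prime).one_lt
  have hϖe : ‖φ ϖ‖ ^ eL = (p : ℝ)⁻¹ := by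
    rw [hϖ, ← Real.rpow_natCast, ← Real.rpow_mul (by positivity), div_mul_cancel₀ _ (by positivity),
      Real.rpow_neg_one]
  obtain ⟨C, hC1, hCcard, hC⟩ :=
    exists_unit_representatives p φ hφ eL fL heL (hef.trans hd.symm) ϖ hϖe
  set S := {ζ : Fin n → L | (∀ i, ζ i ≠ 0) ∧ IsIsolatedRoot (fun i => (G i).map φ)
    (fun j => φ (ζ j)) ∧ ∀ i, ordp p (φ (ζ i)) = v i} with hS
  have hbound : (C.card : ℝ) ^ n * β' (n, m) ≤
      (p : ℝ) ^ (d * n) * (1 - 1 / (p : ℝ) ^ fL) ^ n * β' (n, m) := by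
    rw [pow_mul, ← mul_pow, ← hef]
    gcongr
  rcases S.eq_empty_or_nonempty with hemp | ⟨ζ₀, hζ₀⟩
  · rw [hemp]
    refine ⟨Set.finite_empty, le_trans ?_ hbound⟩
    rw [Set.ncard_empty, Nat.cast_zero]
    positivity
  have hratio {ζ : Fin n → L} (hζ : ζ ∈ S) (i : Fin n) : ‖φ (ζ i / ζ₀ i)‖ = 1 := by
    have h1 : Real.logb p ‖φ (ζ i)‖ = Real.logb p ‖φ (ζ₀ i)‖ :=
      neg_injective ((hζ.2.2 i).trans (hζ₀.2.2 i).symm)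
    have hz : 0 < ‖φ (ζ i)‖ := by simpa using hζ.1 i
    have hz0 : 0 < ‖φ (ζ₀ i)‖ := by simpa using hζ₀.1 i
    have h2 := Real.logb_injOn_pos hp1 hz hz0 h1
    rw [map_div₀, norm_div, h2, div_self hz0.ne']
  have hcover : ∀ ζ ∈ S, ∃ c : Fin n → C, ∀ i, ‖φ (ζ i / ζ₀ i - c i)‖ ≤ 1 / (p : ℝ) := by
    intro ζ hζ
    choose c hcC hc using fun i => hC _ (hratio hζ i)
    exact ⟨fun i => ⟨c i, hcC i⟩, hc⟩
  -- `T c` is the part of `S` close to the point with coordinates `ζ₀ i * c i`.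
  let T : (Fin n → C) → Set (Fin n → L) := fun c =>
    {ζ | ζ ∈ S ∧ ∀ i, ‖φ (ζ i / ζ₀ i - c i)‖ ≤ 1 / (p : ℝ)}
  have hT (c : Fin n → C) : (T c).Finite ∧ (T c).ncard ≤ β' (n, m) := by
    have hc0 (i : Fin n) : (c i : L) ≠ 0 := by
      intro h
      have := hC1 _ (c i).2
      simp [h] at this
    have ha0 (i : Fin n) : φ (ζ₀ i * c i) ≠ 0 := by
      rw [Ne, map_eq_zero]
      exact mul_ne_zero (hζ₀.1 i) (hc0 i)
    obtain ⟨hfin, hle⟩ := hβ' p inferInstance Cp inferInstance inferInstance inferInstance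
      inferInstance inferInstance hiso hdense n m _ (isSparseSystem_scale φ ha0 hG)
    -- Dividing by `ζ₀ i * c i` moves `T c` into the roots near `(1, …, 1)` of the rescaled system.
    let g : (Fin n → L) → (Fin n → Cp) := fun ζ i => φ (ζ i / (ζ₀ i * c i))
    have hmaps : Set.MapsTo g (T c) {x : Fin n → Cp |
        IsIsolatedRoot (fun i => scalePoly (fun i => φ (ζ₀ i * c i)) ((G i).map φ)) x ∧
          ∀ i, ‖x i - 1‖ ≤ 1 / (p : ℝ)} := by
      intro ζ hζ
      refine ⟨isIsolatedRoot_scalePoly ha0 ?_, fun i => ?_⟩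
      · have : (fun i => φ (ζ₀ i * c i) * g ζ i) = fun i => φ (ζ i) := by
          funext i
          rw [← map_mul, mul_div_cancel₀ _ (mul_ne_zero (hζ₀.1 i) (hc0 i))]
        rw [this]
        exact hζ.1.2.1
      · have : g ζ i - 1 = φ (ζ i / ζ₀ i - c i) / φ (c i) := by
          have h1 := hζ₀.1 i
          have h2 := hc0 i
          rw [← map_div₀, ← map_one φ, ← map_sub]
          congr 1
          field_simp
        rw [this, norm_div, hC1 _ (c i).2, div_one]
        exact hζ.2 i
    have hinj : Set.InjOn g (T c) := by
      intro ζ _ ζ' _ h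
      funext i
      have h1 := φ.injective (congrFun h i)
      exact (div_left_inj' (mul_ne_zero (hζ₀.1 i) (hc0 i))).1 h1
    exact ⟨Set.Finite.of_injOn hmaps hinj hfin,
      (Set.ncard_le_ncard_of_injOn g hmaps hinj hfin).trans (by exact_mod_cast hle)⟩
  have hST : S ⊆ ⋃ c, T c := by
    intro ζ hζ
    obtain ⟨c, hc⟩ := hcover ζ hζ
    exact Set.mem_iUnion.2 ⟨c, hζ, hc⟩
  have hUfin : (⋃ c, T c).Finite := Set.finite_iUnion fun c => (hT c).1
  refine ⟨hUfin.subset hST, le_trans ?_ hbound⟩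
  have hcount : S.ncard ≤ C.card ^ n * β' (n, m) := by
    refine (Set.ncard_le_ncard hST hUfin).trans ((Set.ncard_iUnion_le_of_fintype T).trans ?_)
    refine (Finset.sum_le_card_nsmul _ _ (β' (n, m)) fun c _ => (hT c).2).trans ?_
    simp
  exact_mod_cast hcount
end

section
/- Let p be a prime, fix an algebraic closure Ω of ℚ_p, and let N be a positive integer. Then the compositum inside Ω of all finite extensions of ℚ_p (contained in Ω) of degree at most N is itself a finite extension of ℚ_p. -/
/-!
Every `x ∈ Ω` of degree at most `N` over `ℚ_p` lies in one fixed finite extension `K` of `ℚ_p`, so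
the compositum is contained in `K`.

The field `K` comes from compactness of `ℤ_p` and continuity of roots
(`exists_finiteDimensional_approx`): given `D` and `δ > 0`, a finite extension `K` can be chosen so
that every `y ∈ Ω` with `‖y‖ ≤ 1` (spectral norm) and degree at most `D` is within `δ` of some
element of `K`. It is generated by the roots of the monic polynomials of degree at most `D` with
coefficients in a finite net of the unit ball of `ℚ_p`.

Take `D = N²` and `δ = ‖N!‖ / p`. By Galois theory it suffices that each `τ ∈ Gal(Ω/K)` fixes each
`x` of degree at most `N` (`fixed_of_approx`). Suppose `τ x ≠ x`, and scale `τ x - x` by a power of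
`p` to get `y` with `1/p < ‖y‖ ≤ 1`; its degree is at most `N²`. The `τ`-orbit of `x` has some length
`m ≤ N`, and `∑_{j < m} τ^j y = 0` by telescoping, so `m y = ∑_{j < m} (y - τ^j y)`. Since `y` is
within `δ` of an element fixed by `τ`, and `τ` is an isometry of the ultrametric field `Ω`, each
summand has norm less than `δ`. Hence `‖m‖ / p < ‖m y‖ < δ = ‖N!‖ / p`, contradicting `m ∣ N!`.
This is a form of Krasner's lemma with a separation constant depending only on `N`, which replaces
any analysis of ramification.
-/

open Polynomial IntermediateField

/-- Rounding `p`-adic integers: a map with finite image which moves each point of the unit ball by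
less than `ε`, and which fixes `0` and `1`, so that rounding the coefficients of a monic polynomial
yields a monic polynomial of the same degree. -/
lemma exists_rounding (p : ℕ) [Fact p.Prime] {ε : ℝ} (hε : 0 < ε) :
    ∃ s : ℚ_[p] → ℚ_[p], (Set.range s).Finite ∧ s 0 = 0 ∧ s 1 = 1 ∧
      ∀ x, ‖x‖ ≤ 1 → ‖s x - x‖ < ε := by
  classical
  obtain ⟨T, -, hTfin, hT⟩ :=
    finite_cover_balls_of_compact (isCompact_closedBall (0 : ℚ_[p]) 1) hε
  have key : ∀ x : ℚ_[p], ∃ t ∈ insert 0 (insert 1 T),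
      (x = 0 → t = 0) ∧ (x = 1 → t = 1) ∧ (‖x‖ ≤ 1 → ‖t - x‖ < ε) := by
    intro x
    by_cases h0 : x = 0
    · exact ⟨0, by simp, by simp, by simp [h0], by simp [h0, hε]⟩
    by_cases h1 : x = 1
    · exact ⟨1, by simp, by simp [h1], by simp, by simp [h1, hε]⟩
    by_cases hx : ‖x‖ ≤ 1
    · have := hT (by simpa using hx : x ∈ Metric.closedBall (0 : ℚ_[p]) 1)
      simp only [Set.mem_iUnion, Metric.mem_ball, exists_prop] at this
      obtain ⟨t, ht, hxt⟩ := this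
      refine ⟨t, by simp [ht], by simp [h0], by simp [h1], fun _ => ?_⟩
      rwa [← dist_eq_norm, dist_comm]
    · exact ⟨0, by simp, by simp, by simp [h1], by simp [hx]⟩
  choose s hsT hs0 hs1 hs using key
  refine ⟨s, ((hTfin.insert 1).insert 0).subset ?_, hs0 0 rfl, hs1 1 rfl, hs⟩
  rintro _ ⟨x, rfl⟩
  exact hsT x

section

variable {p : ℕ} [Fact p.Prime] {Ω : Type*} [NormedField Ω] [NormedAlgebra ℚ_[p] Ω]

lemma exists_finiteDimensional_approx [IsAlgClosure ℚ_[p] Ω]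
    (hnorm : ∀ x : Ω, ‖x‖ = spectralNorm ℚ_[p] Ω x) (D : ℕ) {δ : ℝ} (hδ : 0 < δ) :
    ∃ K : IntermediateField ℚ_[p] Ω, FiniteDimensional ℚ_[p] K ∧
      ∀ y : Ω, ‖y‖ ≤ 1 → (minpoly ℚ_[p] y).natDegree ≤ D → ∃ b ∈ K, ‖y - b‖ < δ := by
  classical
  have : IsAlgClosed Ω := IsAlgClosure.isAlgClosed ℚ_[p]
  have : Algebra.IsAlgebraic ℚ_[p] Ω := IsAlgClosure.isAlgebraic
  set η := min δ 1 with hη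
  have hη0 : 0 < η := lt_min hδ one_pos
  have hη1 : η ≤ 1 := min_le_right _ _
  -- With this `ε`, continuity of roots moves a root by at most `((n + 1) ε) ^ (1 / n) ≤ η`
  -- for every degree `1 ≤ n ≤ D`.
  set ε := η ^ D / (D + 1) with hεdef
  have hε : 0 < ε := by positivity
  obtain ⟨s, hsfin, hs0, hs1, hs⟩ := exists_rounding p hε
  have hfin := bUnion_roots_finite (algebraMap ℚ_[p] Ω) D hsfin
  refine ⟨adjoin ℚ_[p] (⋃ (f : ℚ_[p][X])
    (_ : f.natDegree ≤ D ∧ ∀ i, f.coeff i ∈ Set.range s),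
      ((f.map (algebraMap ℚ_[p] Ω)).roots.toFinset : Set Ω)), ?_, ?_⟩
  · have := hfin.to_subtype
    exact finiteDimensional_adjoin fun x _ => Algebra.IsIntegral.isIntegral x
  intro y hy hyD
  set f := minpoly ℚ_[p] y with hf
  have hint : IsIntegral ℚ_[p] y := Algebra.IsIntegral.isIntegral y
  have hfm : f.Monic := minpoly.monic hint
  have hn0 : 0 < f.natDegree := minpoly.natDegree_pos hint
  have hcoef : ∀ i, ‖f.coeff i‖ ≤ 1 := by
    rw [hnorm, spectralNorm] at hy
    exact (spectralValue_le_one_iff hfm).1 hy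
  set g : ℚ_[p][X] := ∑ i ∈ Finset.range (f.natDegree + 1), monomial i (s (f.coeff i)) with hg
  have hgc : ∀ i, g.coeff i = s (f.coeff i) := by
    intro i
    simp only [hg, finsetSum_coeff, coeff_monomial, Finset.sum_ite_eq', Finset.mem_range]
    split_ifs with h
    · rfl
    · rw [coeff_eq_zero_of_natDegree_lt (by omega), hs0]
  have hgle : g.natDegree ≤ f.natDegree := by
    rw [natDegree_le_iff_coeff_eq_zero]
    intro i hi
    rw [hgc, coeff_eq_zero_of_natDegree_lt hi, hs0]
  have hg1 : g.coeff f.natDegree = 1 := by rw [hgc, hfm.coeff_natDegree, hs1]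
  have hgm : g.Monic := monic_of_natDegree_le_of_coeff_eq_one _ hgle hg1
  have hgdeg : g.natDegree = f.natDegree :=
    le_antisymm hgle (le_natDegree_of_ne_zero (by simp [hg1]))
  obtain ⟨b, hb, hyb⟩ := exists_aroots_norm_sub_lt_of_norm_coeff_sub_lt (L := Ω) hε
    (minpoly.aeval ℚ_[p] y) hfm hgm hgdeg (fun i => by rw [hgc]; exact hs _ (hcoef i))
    (IsAlgClosed.splits _)
  refine ⟨b, subset_adjoin _ _ ?_, hyb.trans_le ?_⟩
  · simp only [Set.mem_iUnion]
    exact ⟨g, ⟨hgle.trans hyD, fun i => ⟨_, (hgc i).symm⟩⟩, by simpa using hb⟩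
  · rw [max_eq_right hy, mul_one]
    have h1 : ((f.natDegree : ℝ) + 1) * ε ≤ η ^ f.natDegree := by
      have : ((f.natDegree : ℝ) + 1) ≤ D + 1 := by exact_mod_cast Nat.succ_le_succ hyD
      calc ((f.natDegree : ℝ) + 1) * ε ≤ (D + 1) * ε := by gcongr
        _ = η ^ D := by rw [hεdef]; field_simp
        _ ≤ η ^ f.natDegree := pow_le_pow_of_le_one hη0.le hη1 hyD
    calc (((f.natDegree : ℝ) + 1) * ε) ^ (f.natDegree : ℝ)⁻¹
        ≤ (η ^ f.natDegree) ^ (f.natDegree : ℝ)⁻¹ :=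
          Real.rpow_le_rpow (by positivity) h1 (by positivity)
      _ = η := Real.pow_rpow_inv_natCast hη0.le hn0.ne'
      _ ≤ δ := min_le_left _ _

/-- Pigeonhole on the conjugates of `x`. -/
lemma exists_pow_apply_eq (N : ℕ) (τ : Gal(Ω/ℚ_[p])) (x : Ω) (hx : IsIntegral ℚ_[p] x)
    (hN : (minpoly ℚ_[p] x).natDegree ≤ N) : ∃ m, 0 < m ∧ m ≤ N ∧ (τ ^ m) x = x := by
  classical
  have hmaps : Set.MapsTo (fun j : ℕ => (τ ^ j) x) (Finset.range (N + 1))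
      (((minpoly ℚ_[p] x).aroots Ω).toFinset : Set Ω) := by
    intro j _
    simp only [Finset.mem_coe, Multiset.mem_toFinset, mem_aroots]
    refine ⟨minpoly.ne_zero hx, ?_⟩
    have := minpoly.aeval ℚ_[p] ((τ ^ j) x)
    rwa [minpoly.algEquiv_eq] at this
  have hcard : ((minpoly ℚ_[p] x).aroots Ω).toFinset.card < (Finset.range (N + 1)).card := by
    have h1 := Multiset.toFinset_card_le ((minpoly ℚ_[p] x).aroots Ω)
    have h2 := card_roots' ((minpoly ℚ_[p] x).map (algebraMap ℚ_[p] Ω))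
    rw [natDegree_map] at h2
    rw [Finset.card_range]
    exact Nat.lt_succ_of_le (h1.trans (h2.trans hN))
  obtain ⟨i, hi, j, hj, hne, hij⟩ := Finset.exists_ne_map_eq_of_card_lt_of_maps_to hcard hmaps
  have aux : ∀ i j : ℕ, i < j → j ≤ N → (τ ^ i) x = (τ ^ j) x →
      ∃ m, 0 < m ∧ m ≤ N ∧ (τ ^ m) x = x := by
    intro i j hlt hjN h
    refine ⟨j - i, by omega, by omega, (τ ^ i).injective ?_⟩
    rw [← AlgEquiv.mul_apply, ← pow_add, h]
    congr 2
    omega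
  simp only [Finset.mem_range] at hi hj
  rcases lt_or_gt_of_ne hne with h | h
  · exact aux i j h (by omega) hij
  · exact aux j i h (by omega) hij.symm

/-- The uniform form of Krasner's lemma: if `τ` fixes a field `K` that approximates all integral
elements of degree at most `N ^ 2` to within `‖N!‖ / p`, then `τ` fixes all elements of degree at
most `N`. -/
lemma fixed_of_approx [Algebra.IsAlgebraic ℚ_[p] Ω] [IsUltrametricDist Ω]
    (hnorm : ∀ x : Ω, ‖x‖ = spectralNorm ℚ_[p] Ω x) (N : ℕ) (K : IntermediateField ℚ_[p] Ω)
    (hK : ∀ y : Ω, ‖y‖ ≤ 1 → (minpoly ℚ_[p] y).natDegree ≤ N * N →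
      ∃ b ∈ K, ‖y - b‖ < ‖(N.factorial : ℚ_[p])‖ / p)
    (τ : Gal(Ω/ℚ_[p])) (hτ : ∀ b ∈ K, τ b = b) (x : Ω)
    (hN : (minpoly ℚ_[p] x).natDegree ≤ N) : τ x = x := by
  by_contra hne
  have hint : ∀ z : Ω, IsIntegral ℚ_[p] z := fun z => Algebra.IsIntegral.isIntegral z
  have hp1 : (1 : ℝ) < p := by exact_mod_cast (Fact.out : p.Prime).one_lt
  have hp0 : (0 : ℝ) < p := by linarith
  have hz : 0 < ‖τ x - x‖ := norm_pos_iff.2 (sub_ne_zero.2 hne)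
  obtain ⟨k, hk1, hk2⟩ := exists_mem_Ioc_zpow hz hp1
  -- Multiplication by `c` scales norms by `p ^ (-(k + 1))`.
  set c : ℚ_[p] := (p : ℚ_[p]) ^ (k + 1) with hc
  have hcn : ‖c‖ = ((p : ℝ) ^ (k + 1))⁻¹ := by
    rw [hc, norm_zpow, Padic.norm_p, inv_zpow]
  set y : Ω := c • (τ x - x) with hy
  have hyn : ‖y‖ = ‖τ x - x‖ / (p : ℝ) ^ (k + 1) := by
    rw [hy, norm_smul, hcn, inv_mul_eq_div]
  have hy1 : ‖y‖ ≤ 1 := by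
    rw [hyn]
    exact div_le_one_of_le₀ hk2 (by positivity)
  have hyp : 1 / (p : ℝ) < ‖y‖ := by
    rw [hyn, lt_div_iff₀ (by positivity), zpow_add_one₀ hp0.ne']
    calc 1 / (p : ℝ) * ((p : ℝ) ^ k * p) = (p : ℝ) ^ k := by field_simp
      _ < _ := hk1
  have hdeg : (minpoly ℚ_[p] y).natDegree ≤ N * N := by
    have := adjoin.finiteDimensional (hint x)
    have := adjoin.finiteDimensional (hint (τ x))
    have hle : ℚ_[p]⟮y⟯ ≤ ℚ_[p]⟮τ x⟯ ⊔ ℚ_[p]⟮x⟯ := by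
      rw [adjoin_simple_le_iff]
      refine IntermediateField.smul_mem _ (sub_mem ?_ ?_)
      · exact le_sup_left (a := ℚ_[p]⟮τ x⟯) (mem_adjoin_simple_self _ _)
      · exact le_sup_right (a := ℚ_[p]⟮τ x⟯) (mem_adjoin_simple_self _ _)
    rw [← adjoin.finrank (hint y)]
    refine (finrank_le_of_le_right hle).trans ((finrank_sup_le _ _).trans ?_)
    rw [adjoin.finrank (hint x), adjoin.finrank (hint (τ x)), minpoly.algEquiv_eq]
    exact Nat.mul_le_mul hN hN
  obtain ⟨b, hbK, hyb⟩ := hK y hy1 hdeg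
  obtain ⟨m, hm0, hmN, hm⟩ := exists_pow_apply_eq N τ x (hint x) hN
  have hpowb : ∀ j : ℕ, (τ ^ j) b = b := by
    intro j
    induction j with
    | zero => simp
    | succ j ih => rw [pow_succ, AlgEquiv.mul_apply, hτ b hbK, ih]
  have hterm : ∀ j : ℕ, ‖y - (τ ^ j) y‖ ≤ ‖y - b‖ := by
    intro j
    have h1 : y - (τ ^ j) y = (y - b) - (τ ^ j) (y - b) := by
      rw [map_sub, hpowb]; ring
    have h2 : ‖(τ ^ j) (y - b)‖ = ‖y - b‖ := by
      rw [hnorm, hnorm, ← spectralNorm_eq_of_equiv]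
    rw [h1, sub_eq_add_neg]
    exact (IsUltrametricDist.norm_add_le_max _ _).trans (by rw [norm_neg, h2, max_self])
  have hsum0 : ∑ j ∈ Finset.range m, (τ ^ j) y = 0 := by
    have h1 : ∀ j : ℕ, (τ ^ j) y = c • ((τ ^ (j + 1)) x - (τ ^ j) x) := by
      intro j
      rw [hy, map_smul, map_sub, pow_succ, AlgEquiv.mul_apply]
    simp only [h1]
    rw [← Finset.smul_sum, Finset.sum_range_sub (fun j => (τ ^ j) x), hm]
    simp
  have hmy : ((m : ℚ_[p]) • y) = ∑ j ∈ Finset.range m, (y - (τ ^ j) y) := by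
    rw [Finset.sum_sub_distrib, hsum0, Finset.sum_const, Finset.card_range, sub_zero,
      Nat.cast_smul_eq_nsmul]
  have hlt : ‖(m : ℚ_[p])‖ * ‖y‖ < ‖(N.factorial : ℚ_[p])‖ / p := by
    rw [← norm_smul, hmy]
    exact (IsUltrametricDist.norm_sum_le_of_forall_le_of_nonneg (norm_nonneg _)
      fun j _ => hterm j).trans_lt hyb
  have hfac : ‖(N.factorial : ℚ_[p])‖ ≤ ‖(m : ℚ_[p])‖ := by
    obtain ⟨d, hd⟩ := Nat.dvd_factorial hm0 hmN
    rw [hd, Nat.cast_mul, norm_mul]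
    exact mul_le_of_le_one_right (norm_nonneg _)
      (by simpa using Padic.norm_int_le_one (p := p) d)
  have : ‖(N.factorial : ℚ_[p])‖ / p ≤ ‖(m : ℚ_[p])‖ * ‖y‖ := by
    rw [div_eq_mul_one_div]
    gcongr
  linarith

lemma exists_finiteDimensional_of_natDegree_le [IsAlgClosure ℚ_[p] Ω] [IsUltrametricDist Ω]
    (hnorm : ∀ x : Ω, ‖x‖ = spectralNorm ℚ_[p] Ω x) (N : ℕ) :
    ∃ K : IntermediateField ℚ_[p] Ω, FiniteDimensional ℚ_[p] K ∧
      ∀ x : Ω, (minpoly ℚ_[p] x).natDegree ≤ N → x ∈ K := by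
  have : Algebra.IsAlgebraic ℚ_[p] Ω := IsAlgClosure.isAlgebraic
  have : Normal ℚ_[p] Ω := IsAlgClosure.normal ℚ_[p] Ω
  have : IsGalois ℚ_[p] Ω := {}
  have hδ : 0 < ‖(N.factorial : ℚ_[p])‖ / p := by
    have hp0 : (0 : ℝ) < p := by exact_mod_cast (Fact.out : p.Prime).pos
    have : (N.factorial : ℚ_[p]) ≠ 0 := by exact_mod_cast N.factorial_ne_zero
    positivity
  obtain ⟨K, hfd, hK⟩ := exists_finiteDimensional_approx hnorm (N * N) hδ
  refine ⟨K, hfd, fun x hx => ?_⟩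
  rw [← InfiniteGalois.fixedField_fixingSubgroup K, mem_fixedField_iff]
  intro τ hτ
  exact fixed_of_approx hnorm N K hK τ ((mem_fixingSubgroup_iff _ _).1 hτ) x hx

end

/-- **Finiteness of the compositum.** For a prime `p`, an algebraic closure `Ω` of `ℚ_p`, and
a positive integer `N`, the compositum inside `Ω` of all finite extensions of `ℚ_p` of degree
at most `N` (i.e. the supremum of all finite-dimensional intermediate fields of `Ω/ℚ_p` of
degree at most `N`) is itself a finite extension of `ℚ_p`. -/
theorem compositum_of_bounded_degree_finite (p : ℕ) [Fact p.Prime] (N : ℕ) (hN : 0 < N)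
    (Ω : Type) [Field Ω] [Algebra ℚ_[p] Ω] [IsAlgClosure ℚ_[p] Ω] :
    FiniteDimensional ℚ_[p]
      ↥(sSup {F : IntermediateField ℚ_[p] Ω |
          FiniteDimensional ℚ_[p] ↥F ∧ Module.finrank ℚ_[p] ↥F ≤ N}) := by
  have : Algebra.IsAlgebraic ℚ_[p] Ω := IsAlgClosure.isAlgebraic
  let : NormedField Ω := spectralNorm.normedField ℚ_[p] Ω
  let : NormedAlgebra ℚ_[p] Ω := spectralNorm.normedAlgebra ℚ_[p] Ω
  have : IsUltrametricDist Ω :=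
    IsUltrametricDist.isUltrametricDist_of_isNonarchimedean_norm
      (isNonarchimedean_spectralNorm (K := ℚ_[p]) (L := Ω))
  obtain ⟨K, hfd, hK⟩ :=
    exists_finiteDimensional_of_natDegree_le (p := p) (Ω := Ω) (fun _ => rfl) N
  have hle : sSup {F : IntermediateField ℚ_[p] Ω |
      FiniteDimensional ℚ_[p] ↥F ∧ Module.finrank ℚ_[p] ↥F ≤ N} ≤ K := by
    refine sSup_le ?_
    rintro F ⟨hF, hFN⟩ x hx
    refine hK x ?_
    rw [← adjoin.finrank (Algebra.IsIntegral.isIntegral x)]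
    exact (finrank_le_of_le_right (adjoin_simple_le_iff.2 hx)).trans hFN
  exact Module.Finite.of_injective (inclusion hle).toLinearMap (inclusion_injective hle)
end

section
/- Let p be a prime, let m ≥ 2 be an integer, and let g ∈ ℂ_p[x] be a nonzero univariate polynomial with exactly m monomial terms. Then the number of roots x ∈ ℂ_p of g satisfying |x − 1|_p ≤ 1/p is at most 1.582·(m−1)·(1 + 1.443·(log(m−1) + 0.367)), where log denotes the natural logarithm. -/
/-!
Write `g(1 + y) = ∑ bₙ yⁿ`, so that `bₙ = ∑ₐ cₐ·(a choose n)`, the sum running over the support of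
`g = ∑ₐ cₐ xᵃ`, and put `k = m - 1`. The theorem combines three facts.

* Newton polygon: a polynomial with `N` roots in the closed disk of radius `r` has an index
  `n ≥ N` at which `|bₙ| rⁿ` is maximal. This is proved by multiplying by one linear factor
  `y - a`, `|a| ≤ r`, at a time: each factor raises the last maximizing index by one
  (`exists_isLastMax_of_dvd`).

* Interpolation (`norm_sum_choose_le`): on a set of `k + 1` natural numbers the function
  `x ↦ (x choose n)` is a combination of polynomials of degree at most `k`, with denominators that
  are products of at most `k` integers from `1` to `n`. Since an integer `1 ≤ i ≤ n` satisfies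
  `|i|_p ≥ 1/n`, this gives `|bₙ| ≤ nᵏ·max_{i ≤ k} |bᵢ|`. The divided differences are produced one
  node at a time from Vandermonde's identity
  `(x - e choose n) = ∑_{j+i=n} (a₀ - e choose j)·(x - a₀ choose i)` and
  `(x - a₀ choose i) = (x - a₀)/i·(x - a₀ - 1 choose i - 1)`.

* For `r = 1/p` and `n > k` maximizing, `|bᵢ| ≤ p^(k - n)|bₙ|` for all `i ≤ k`, so the
  interpolation estimate forces `p^(n - k) ≤ nᵏ`, hence `n·log 2 ≤ k·log 2 + k·log n`. Bounding
  `log n` by the tangent line of `log` at `e·k/log 2` yields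
  `n·(1 - 1/e) ≤ k·(1 + (log k - log (log 2))/log 2)`, and the decimals in the theorem round
  `e/(e - 1)`, `1/log 2` and `-log (log 2)` up (`numeric_bound`).
-/

open Polynomial

/-! ### Roots in a closed disk -/

/-- `n` is the last index at which `‖coeff i‖ * r ^ i` attains its maximum, and this maximum is
nonzero (automatic for `Q ≠ 0` and `r > 0`). -/
def IsLastMax {K : Type*} [NormedField K] (r : ℝ) (Q : K[X]) (n : ℕ) : Prop :=
  Q.coeff n ≠ 0 ∧ (∀ i, ‖Q.coeff i‖ * r ^ i ≤ ‖Q.coeff n‖ * r ^ n) ∧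
    ∀ i, n < i → ‖Q.coeff i‖ * r ^ i < ‖Q.coeff n‖ * r ^ n

lemma exists_isLastMax {K : Type*} [NormedField K] {r : ℝ} (hr : 0 < r) {Q : K[X]} (hQ : Q ≠ 0) :
    ∃ n, IsLastMax r Q n := by
  -- Maximizing lexicographically selects the last of the maximizing indices.
  obtain ⟨n, hn, hmax⟩ := Q.support.exists_max_image
    (fun i => toLex (‖Q.coeff i‖ * r ^ i, i)) (Polynomial.support_nonempty.mpr hQ)
  have hn0 : Q.coeff n ≠ 0 := Polynomial.mem_support_iff.mp hn
  have hpos : 0 < ‖Q.coeff n‖ * r ^ n := by positivity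
  refine ⟨n, hn0, fun i => ?_, fun i hi => ?_⟩
  · by_cases h : Q.coeff i = 0
    · simpa [h] using hpos.le
    · rcases Prod.Lex.le_iff.mp (hmax i (Polynomial.mem_support_iff.mpr h)) with h1 | h1
      · exact h1.le
      · exact h1.1.le
  · by_cases h : Q.coeff i = 0
    · simpa [h] using hpos
    · rcases Prod.Lex.le_iff.mp (hmax i (Polynomial.mem_support_iff.mpr h)) with h1 | h1
      · exact h1
      · exact absurd h1.2 (not_le.mpr hi)

lemma IsLastMax.X_sub_C_mul {K : Type*} [NormedField K] [IsUltrametricDist K] {r : ℝ}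
    (hr : 0 < r) {Q : K[X]} {n : ℕ} (h : IsLastMax r Q n) {a : K} (ha : ‖a‖ ≤ r) :
    IsLastMax r ((X - C a) * Q) (n + 1) := by
  obtain ⟨h0, h1, h2⟩ := h
  have hpos : 0 < ‖Q.coeff n‖ * r ^ n := by positivity
  have hc : ∀ i, ((X - C a) * Q).coeff (i + 1) = Q.coeff i - a * Q.coeff (i + 1) := fun i => by
    simp [sub_mul]
  have hc0 : ((X - C a) * Q).coeff 0 = - (a * Q.coeff 0) := by simp [sub_mul]
  have hmul : ∀ i, ‖a * Q.coeff i‖ * r ^ i ≤ r * (‖Q.coeff i‖ * r ^ i) := fun i => by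
    rw [norm_mul, mul_assoc]; gcongr
  have hbd : ∀ i, ‖((X - C a) * Q).coeff (i + 1)‖ * r ^ (i + 1) ≤
      r * max (‖Q.coeff i‖ * r ^ i) (‖Q.coeff (i + 1)‖ * r ^ (i + 1)) := fun i => by
    rw [hc, sub_eq_add_neg]
    rcases le_max_iff.mp (IsUltrametricDist.norm_add_le_max (Q.coeff i) (-(a * Q.coeff (i + 1))))
      with h | h
    · calc _ ≤ ‖Q.coeff i‖ * r ^ (i + 1) := by gcongr
        _ = r * (‖Q.coeff i‖ * r ^ i) := by ring
        _ ≤ _ := by gcongr; exact le_max_left _ _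
    · rw [norm_neg] at h
      calc _ ≤ ‖a * Q.coeff (i + 1)‖ * r ^ (i + 1) := by gcongr
        _ ≤ r * (‖Q.coeff (i + 1)‖ * r ^ (i + 1)) := hmul _
        _ ≤ _ := by gcongr; exact le_max_right _ _
  have hlt : ‖a * Q.coeff (n + 1)‖ < ‖Q.coeff n‖ := by
    have h3 : ‖a * Q.coeff (n + 1)‖ * r ^ (n + 1) < ‖Q.coeff n‖ * r ^ (n + 1) :=
      calc _ ≤ r * (‖Q.coeff (n + 1)‖ * r ^ (n + 1)) := hmul _
        _ < r * (‖Q.coeff n‖ * r ^ n) :=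
          mul_lt_mul_of_pos_left (h2 _ (Nat.lt_succ_self n)) hr
        _ = _ := by ring
    exact lt_of_mul_lt_mul_right h3 (by positivity)
  have heq : ‖((X - C a) * Q).coeff (n + 1)‖ = ‖Q.coeff n‖ := by
    rw [hc, sub_eq_add_neg, IsUltrametricDist.norm_add_eq_max_of_norm_ne_norm
      (by rw [norm_neg]; exact hlt.ne'), norm_neg, max_eq_left hlt.le]
  have heq' : ‖((X - C a) * Q).coeff (n + 1)‖ * r ^ (n + 1) = r * (‖Q.coeff n‖ * r ^ n) := by
    rw [heq]; ring
  refine ⟨norm_ne_zero_iff.mp (by rw [heq]; exact norm_ne_zero_iff.mpr h0), fun i => ?_,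
    fun i hi => ?_⟩ <;> rw [heq']
  · cases i with
    | zero =>
      rw [hc0, norm_neg]
      exact (hmul 0).trans (mul_le_mul_of_nonneg_left (h1 0) hr.le)
    | succ i => exact (hbd i).trans (by gcongr; exact max_le (h1 _) (h1 _))
  · cases i with
    | zero => omega
    | succ i =>
      exact (hbd i).trans_lt
        (by gcongr; exact max_lt (h2 _ (by omega)) (h2 _ (by omega)))

/-- Multiplying by the linear factors of `s` raises the last maximizing index by `card s`, so the
last maximizing index of `G` is at least the number of its roots in the disk. -/
lemma exists_isLastMax_of_dvd {K : Type*} [NormedField K] [IsUltrametricDist K] {r : ℝ}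
    (hr : 0 < r) {G : K[X]} (hG : G ≠ 0) (s : Multiset K) (hs : ∀ a ∈ s, ‖a‖ ≤ r)
    (hdvd : (s.map fun a => X - C a).prod ∣ G) :
    ∃ n, Multiset.card s ≤ n ∧ IsLastMax r G n := by
  obtain ⟨Q, rfl⟩ := hdvd
  have hQ : Q ≠ 0 := right_ne_zero_of_mul hG
  clear hG
  induction s using Multiset.induction_on with
  | empty =>
    obtain ⟨n, hn⟩ := exists_isLastMax hr hQ
    exact ⟨n, by simp, by simpa using hn⟩
  | cons a s ih =>
    obtain ⟨n, hn, h⟩ := ih fun b hb => hs b (Multiset.mem_cons_of_mem hb)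
    refine ⟨n + 1, by simpa using hn, ?_⟩
    rw [Multiset.map_cons, Multiset.prod_cons, mul_assoc]
    exact h.X_sub_C_mul hr (hs a (Multiset.mem_cons_self a s))

/-! ### Interpolation of binomial coefficients -/

/-- If the functional `f ↦ ∑ₐ cₐ f(a)`, supported on at most `k + 1` nodes, is bounded by `B` on the
binomial coefficients of degree at most `k`, then on `x ↦ (x - e choose n)` it is bounded by
`B·max(n, 1)ᵏ`. In the induction the smallest node `a₀` is removed, `cₐ` is replaced by
`cₐ (a - a₀)` and `e` by `a₀ + 1`; removing the smallest node keeps all differences `a - e`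
nonnegative, so natural subtraction is harmless. -/
lemma norm_sum_choose_le {K : Type*} [NormedField K] [IsUltrametricDist K]
    (hK : ∀ i : ℕ, i ≠ 0 → 1 ≤ (i : ℝ) * ‖(i : K)‖) (B : ℝ) (k : ℕ) :
    ∀ (A : Finset ℕ) (c : ℕ → K) (e n : ℕ), A.card ≤ k + 1 → (∀ a ∈ A, e ≤ a) →
      (∀ i ≤ k, ‖∑ a ∈ A, c a * (a.choose i : K)‖ ≤ B) →
      ‖∑ a ∈ A, c a * ((a - e).choose n : K)‖ ≤ B * (max n 1 : ℕ) ^ k := by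
  induction k with
  | zero =>
    intro A c e n hA he hB
    have hB0 := hB 0 le_rfl
    rcases Finset.card_le_one_iff_subset_singleton.mp hA with ⟨a, ha⟩
    rcases Finset.subset_singleton_iff.mp ha with rfl | rfl
    · simpa using hB0
    · simp only [Finset.sum_singleton, Nat.choose_zero_right, Nat.cast_one, mul_one, pow_zero,
        norm_mul] at hB0 ⊢
      exact (mul_le_of_le_one_right (norm_nonneg _)
        (IsUltrametricDist.norm_natCast_le_one K _)).trans hB0
  | succ k ih =>
    intro A c e n hA he hB
    have hB0 : 0 ≤ B := (norm_nonneg _).trans (hB 0 (Nat.zero_le _))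
    rcases A.eq_empty_or_nonempty with rfl | hne
    · simp only [Finset.sum_empty, norm_zero]; positivity
    set a₀ := A.min' hne with ha₀
    have ha₀A : a₀ ∈ A := A.min'_mem hne
    have hmin : ∀ a ∈ A, a₀ ≤ a := fun a ha => A.min'_le a ha
    have hexp : ∑ a ∈ A, c a * ((a - e).choose n : K) =
        ∑ ij ∈ Finset.HasAntidiagonal.antidiagonal n, ((a₀ - e).choose ij.1 : K) *
          ∑ a ∈ A, c a * ((a - a₀).choose ij.2 : K) := by
      simp_rw [Finset.mul_sum]
      rw [Finset.sum_comm]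
      refine Finset.sum_congr rfl fun a ha => ?_
      have h1 : a - e = (a₀ - e) + (a - a₀) := by
        have := hmin a ha; have := he a₀ ha₀A; omega
      rw [h1, Nat.add_choose_eq]
      push_cast
      rw [Finset.mul_sum]
      exact Finset.sum_congr rfl fun ij _ => by ring
    rw [hexp]
    have hone : (1 : ℝ) ≤ (max n 1 : ℕ) := by exact_mod_cast le_max_right n 1
    refine IsUltrametricDist.norm_sum_le_of_forall_le_of_nonneg (by positivity) fun ij hij => ?_
    obtain ⟨j, i⟩ := ij
    have hij' : j + i = n := Finset.HasAntidiagonal.mem_antidiagonal.mp hij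
    rw [norm_mul]
    refine (mul_le_of_le_one_left (norm_nonneg _)
        (IsUltrametricDist.norm_natCast_le_one K _)).trans ?_
    cases i with
    | zero =>
      have := hB 0 (Nat.zero_le _)
      simp only [Nat.choose_zero_right] at this ⊢
      exact this.trans (le_mul_of_one_le_right hB0 (one_le_pow₀ hone))
    | succ i =>
      have hstep : ((i + 1 : ℕ) : K) * ∑ a ∈ A, c a * ((a - a₀).choose (i + 1) : K) =
          ∑ a ∈ A.erase a₀, (c a * ((a : K) - a₀)) * ((a - (a₀ + 1)).choose i : K) := by
        rw [← Finset.add_sum_erase A _ ha₀A]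
        simp only [Nat.sub_self, Nat.choose_zero_succ, Nat.cast_zero, mul_zero, zero_add]
        rw [Finset.mul_sum]
        refine Finset.sum_congr rfl fun a ha => ?_
        have h1 : a₀ + 1 ≤ a :=
          lt_of_le_of_ne (hmin a (Finset.mem_of_mem_erase ha)) (Finset.ne_of_mem_erase ha).symm
        obtain ⟨d, rfl⟩ := Nat.exists_eq_add_of_le h1
        have h2 : a₀ + 1 + d - a₀ = d + 1 := by omega
        have h3 : a₀ + 1 + d - (a₀ + 1) = d := by omega
        have h4 := congrArg (Nat.cast : ℕ → K) (Nat.add_one_mul_choose_eq d i)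
        rw [h2, h3]
        push_cast at h4 ⊢
        linear_combination (-(c (a₀ + 1 + d))) * h4
      have hB' : ∀ l ≤ k, ‖∑ a ∈ A.erase a₀, (c a * ((a : K) - a₀)) * (a.choose l : K)‖ ≤ B := by
        intro l hl
        -- `(x - a₀)·(x choose l) = (l + 1)·(x choose l + 1) + (l - a₀)·(x choose l)`
        have h1 : ∑ a ∈ A.erase a₀, (c a * ((a : K) - a₀)) * (a.choose l : K) =
            ((l + 1 : ℕ) : K) * ∑ a ∈ A, c a * (a.choose (l + 1) : K) +
            (((l : ℤ) - a₀ : ℤ) : K) * ∑ a ∈ A, c a * (a.choose l : K) := by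
          rw [Finset.sum_erase _ (by simp), Finset.mul_sum, Finset.mul_sum,
            ← Finset.sum_add_distrib]
          refine Finset.sum_congr rfl fun a _ => ?_
          have h2 : (a.choose (l + 1) : K) * (l + 1) = a.choose l * ((a : K) - l) := by
            rcases le_or_gt l a with h | h
            · have := congrArg (Nat.cast : ℕ → K) (Nat.choose_succ_right_eq a l)
              rw [Nat.cast_mul, Nat.cast_mul, Nat.cast_sub h] at this
              exact_mod_cast this
            · simp [Nat.choose_eq_zero_of_lt h, Nat.choose_eq_zero_of_lt (Nat.lt_succ_of_lt h)]
          push_cast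
          linear_combination (-(c a)) * h2
        rw [h1]
        refine (IsUltrametricDist.norm_add_le_max _ _).trans (max_le ?_ ?_) <;> rw [norm_mul]
        · exact (mul_le_of_le_one_left (norm_nonneg _)
            (IsUltrametricDist.norm_natCast_le_one K _)).trans (hB _ (by omega))
        · exact (mul_le_of_le_one_left (norm_nonneg _)
            (IsUltrametricDist.norm_intCast_le_one K _)).trans (hB _ (by omega))
      have hrec := ih (A.erase a₀) (fun a => c a * ((a : K) - a₀)) (a₀ + 1) i
        (by rw [Finset.card_erase_of_mem ha₀A]; omega)
        (fun a ha => lt_of_le_of_ne (hmin a (Finset.mem_of_mem_erase ha))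
          (Finset.ne_of_mem_erase ha).symm) hB'
      rw [← hstep, norm_mul] at hrec
      set S := ‖∑ a ∈ A, c a * ((a - a₀).choose (i + 1) : K)‖ with hS
      have hS0 : 0 ≤ S := norm_nonneg _
      have hin : i + 1 ≤ max n 1 := by omega
      have hin' : max i 1 ≤ max n 1 := by omega
      calc S ≤ (((i + 1 : ℕ) : ℝ) * ‖((i + 1 : ℕ) : K)‖) * S :=
            le_mul_of_one_le_left hS0 (hK (i + 1) (Nat.succ_ne_zero i))
        _ = ((i + 1 : ℕ) : ℝ) * (‖((i + 1 : ℕ) : K)‖ * S) := by ring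
        _ ≤ ((i + 1 : ℕ) : ℝ) * (B * (max i 1 : ℕ) ^ k) := by gcongr
        _ ≤ ((max n 1 : ℕ) : ℝ) * (B * (max n 1 : ℕ) ^ k) := by gcongr
        _ = B * (max n 1 : ℕ) ^ (k + 1) := by ring

/-- The `p`-adic absolute value of a positive integer `i` is at least `1 / i`. -/
lemma one_le_mul_norm_natCast (p : ℕ) [Fact p.Prime] (i : ℕ) (hi : i ≠ 0) :
    1 ≤ (i : ℝ) * ‖(i : ℚ_[p])‖ := by
  have hp : (0 : ℝ) < p := by exact_mod_cast (Fact.out : p.Prime).pos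
  rw [Padic.norm_eq_zpow_neg_valuation (by exact_mod_cast hi), Padic.valuation_natCast, zpow_neg,
    zpow_natCast, ← div_eq_mul_inv, one_le_div (by positivity)]
  exact_mod_cast Nat.le_of_dvd (Nat.pos_of_ne_zero hi) pow_padicValNat_dvd

lemma coeff_taylor_one {K : Type*} [Field K] (g : K[X]) (n : ℕ) :
    (taylor 1 g).coeff n = ∑ a ∈ g.support, g.coeff a * (a.choose n : K) := by
  rw [taylor_coeff, hasseDeriv_apply, Polynomial.sum, eval_finsetSum]
  exact Finset.sum_congr rfl fun a _ => by simp [mul_comm]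

/-! ### The real estimate -/

lemma numeric_bound {k n : ℕ} (hk : 1 ≤ k)
    (h : (n : ℝ) * Real.log 2 ≤ k * Real.log 2 + k * Real.log n) :
    (n : ℝ) ≤ 1.582 * k * (1 + 1.443 * (Real.log k + 0.367)) := by
  have hl : 0.6931471803 < Real.log 2 := Real.log_two_gt_d9
  have hl0 : 0 < Real.log 2 := by linarith
  have he : 2.7182818283 < Real.exp 1 := Real.exp_one_gt_d9
  have hk1 : (1 : ℝ) ≤ k := by exact_mod_cast hk
  have hk0 : (0 : ℝ) < k := by linarith
  have hlogk : 0 ≤ Real.log k := Real.log_nonneg hk1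
  have hll : -0.367 ≤ Real.log (Real.log 2) := by
    rw [Real.le_log_iff_exp_le hl0, Real.exp_neg]
    have h1 : (1.4431 : ℝ) ≤ Real.exp 0.367 := by
      refine le_trans ?_ (Real.sum_le_exp_of_nonneg (by norm_num) 5)
      norm_num [Finset.sum_range_succ, Nat.factorial]
    calc (Real.exp 0.367)⁻¹ ≤ (1.4431 : ℝ)⁻¹ := by gcongr
      _ ≤ 0.6931471803 := by norm_num
      _ ≤ _ := hl.le
  rcases Nat.eq_zero_or_pos n with rfl | hn
  · simp only [Nat.cast_zero]; positivity
  have hn0 : (0 : ℝ) < n := by exact_mod_cast hn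
  -- the tangent line of `log` at `e * k / log 2`
  have htan : Real.log n ≤
      n * Real.log 2 / (Real.exp 1 * k) + Real.log k - Real.log (Real.log 2) := by
    have h1 := Real.log_le_sub_one_of_pos
      (show 0 < n * Real.log 2 / (Real.exp 1 * k) by positivity)
    rw [Real.log_div (by positivity) (by positivity), Real.log_mul (by positivity) (by positivity),
      Real.log_mul (by positivity) (by positivity), Real.log_exp] at h1
    linarith
  have h2 : (k : ℝ) * Real.log n ≤
      n * Real.log 2 * (Real.exp 1)⁻¹ + k * (Real.log k + 0.367) :=
    calc (k : ℝ) * Real.log n ≤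
        k * (n * Real.log 2 / (Real.exp 1 * k) + (Real.log k + 0.367)) := by
          gcongr; linarith
      _ = _ := by field_simp
  have hei : (Real.exp 1)⁻¹ ≤ 1 - 1 / 1.582 := by
    calc (Real.exp 1)⁻¹ ≤ (2.7182818283 : ℝ)⁻¹ := by gcongr
      _ ≤ _ := by norm_num
  have h3 : n * Real.log 2 * (Real.exp 1)⁻¹ ≤ n * Real.log 2 * (1 - 1 / 1.582) := by gcongr
  have h4 : (Real.log k + 0.367) ≤ 1.443 * Real.log 2 * (Real.log k + 0.367) :=
    le_mul_of_one_le_left (by positivity) (by linarith)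
  have h5 : (k : ℝ) * (Real.log k + 0.367) ≤
      k * (1.443 * Real.log 2 * (Real.log k + 0.367)) := by gcongr
  refine le_of_mul_le_mul_right ?_ hl0
  linarith

/-- **Lenstra's univariate bound.** Let `p` be a prime, `m ≥ 2`, and let `g` be a nonzero
univariate polynomial over `ℂ_p` with exactly `m` monomial terms.  Then the number of roots
`x ∈ ℂ_p` of `g` with `|x - 1|_p ≤ 1/p` is at most
`1.582·(m-1)·(1 + 1.443·(log(m-1) + 0.367))`.  Here `Cp` is any field satisfying the
characterizing axioms of `ℂ_p`. -/
theorem lenstra_univariate_bound (p : ℕ) [Fact p.Prime] (m : ℕ) (hm : 2 ≤ m)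
    (Cp : Type) [NormedField Cp] [IsUltrametricDist Cp]
    [CompleteSpace Cp] [IsAlgClosed Cp] [Algebra ℚ_[p] Cp]
    (hiso : Isometry (algebraMap ℚ_[p] Cp))
    (hdense : Dense {x : Cp | IsAlgebraic ℚ_[p] x})
    (g : Polynomial Cp) (hg : g ≠ 0) (hsupp : g.support.card = m) :
    {x : Cp | Polynomial.eval x g = 0 ∧ ‖x - 1‖ ≤ 1 / (p : ℝ)}.Finite ∧
    ({x : Cp | Polynomial.eval x g = 0 ∧ ‖x - 1‖ ≤ 1 / (p : ℝ)}.ncard : ℝ) ≤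
      1.582 * ((m : ℝ) - 1) * (1 + 1.443 * (Real.log ((m : ℝ) - 1) + 0.367)) := by
  classical
  have hfin : {x : Cp | Polynomial.eval x g = 0 ∧ ‖x - 1‖ ≤ 1 / (p : ℝ)}.Finite :=
    g.roots.toFinset.finite_toSet.subset fun x hx => by simpa [hg] using hx.1
  refine ⟨hfin, ?_⟩
  obtain ⟨k, rfl⟩ : ∃ k, m = k + 1 := ⟨m - 1, by omega⟩
  have hk : 1 ≤ k := by omega
  have hp2 : (2 : ℝ) ≤ p := by exact_mod_cast (Fact.out : p.Prime).two_le
  have hp0 : (0 : ℝ) < p := by linarith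
  have hr : (0 : ℝ) < 1 / p := by positivity
  have hK : ∀ i : ℕ, i ≠ 0 → 1 ≤ (i : ℝ) * ‖(i : Cp)‖ := fun i hi => by
    have h1 := hiso.norm_map_of_map_zero (map_zero _) (i : ℚ_[p])
    rw [map_natCast] at h1
    rw [h1]
    exact one_le_mul_norm_natCast p i hi
  set G := taylor 1 g with hGdef
  have hG : G ≠ 0 := by
    rw [hGdef, Ne, map_eq_zero_iff _ (taylor_injective 1)]; exact hg
  set s := G.roots.filter fun y => ‖y‖ ≤ 1 / (p : ℝ) with hs
  obtain ⟨n, hsn, hn0, hmax, -⟩ := exists_isLastMax_of_dvd hr hG s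
    (fun a ha => (Multiset.mem_filter.mp ha).2)
    ((Multiset.prod_X_sub_C_dvd_iff_le_roots hG s).mpr (Multiset.filter_le _ _))
  have hcard : {x : Cp | Polynomial.eval x g = 0 ∧ ‖x - 1‖ ≤ 1 / (p : ℝ)}.ncard ≤ n := by
    refine le_trans ?_ ((Multiset.toFinset_card_le s).trans hsn)
    rw [← Set.ncard_coe_finset]
    refine Set.ncard_le_ncard_of_injOn (fun x => x - 1) (fun x hx => ?_)
      (fun x _ y _ h => sub_left_injective h) s.toFinset.finite_toSet
    have h1 : G.IsRoot (x - 1) := by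
      rw [IsRoot, hGdef, taylor_eval, sub_add_cancel]; exact hx.1
    simp only [Finset.mem_coe, Multiset.mem_toFinset, hs, Multiset.mem_filter]
    exact ⟨(mem_roots hG).mpr h1, hx.2⟩
  have hkey : (n : ℝ) * Real.log 2 ≤ k * Real.log 2 + k * Real.log n := by
    have hl0 : 0 < Real.log 2 := Real.log_pos (by norm_num)
    rcases le_or_gt n k with hnk | hnk
    · have h1 : (n : ℝ) * Real.log 2 ≤ k * Real.log 2 := by gcongr
      have h2 : 0 ≤ (k : ℝ) * Real.log n := by
        have := Real.log_natCast_nonneg n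
        positivity
      linarith
    · obtain ⟨d, rfl⟩ := Nat.exists_eq_add_of_lt hnk
      have hBi : ∀ i ≤ k, ‖∑ a ∈ g.support, g.coeff a * (a.choose i : Cp)‖ ≤
          ‖G.coeff (k + d + 1)‖ * (1 / p : ℝ) ^ (d + 1) := by
        intro i hi
        rw [← coeff_taylor_one]
        have hle1 : (1 / p : ℝ) ≤ 1 := by rw [div_le_one hp0]; linarith
        have h1 : ‖G.coeff i‖ * (1 / p : ℝ) ^ k ≤
            (‖G.coeff (k + d + 1)‖ * (1 / p : ℝ) ^ (d + 1)) * (1 / p : ℝ) ^ k :=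
          calc _ ≤ ‖G.coeff i‖ * (1 / p : ℝ) ^ i :=
                mul_le_mul_of_nonneg_left (pow_le_pow_of_le_one hr.le hle1 hi) (norm_nonneg _)
            _ ≤ _ := hmax i
            _ = _ := by ring
        exact le_of_mul_le_mul_right h1 (by positivity)
      have h1 := norm_sum_choose_le hK _ k g.support (fun a => g.coeff a) 0 (k + d + 1)
        hsupp.le (fun a _ => Nat.zero_le a) hBi
      simp only [Nat.sub_zero] at h1
      rw [← coeff_taylor_one, ← hGdef, max_eq_left (by omega), mul_assoc] at h1
      have hpos : 0 < ‖G.coeff (k + d + 1)‖ := norm_pos_iff.mpr hn0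
      have h2 : (1 : ℝ) ≤ (1 / p : ℝ) ^ (d + 1) * ((k + d + 1 : ℕ) : ℝ) ^ k :=
        le_of_mul_le_mul_left (by rwa [mul_one]) hpos
      have h3 : (p : ℝ) ^ (d + 1) ≤ ((k + d + 1 : ℕ) : ℝ) ^ k := by
        rwa [one_div, inv_pow, inv_mul_eq_div, one_le_div (by positivity)] at h2
      have h4 : (2 : ℝ) ^ (d + 1) ≤ ((k + d + 1 : ℕ) : ℝ) ^ k :=
        le_trans (by gcongr) h3
      have h5 := Real.log_le_log (by positivity) h4
      rw [Real.log_pow, Real.log_pow] at h5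
      have h6 : ((k + d + 1 : ℕ) : ℝ) = k + ((d + 1 : ℕ) : ℝ) := by push_cast; ring
      calc ((k + d + 1 : ℕ) : ℝ) * Real.log 2
          = k * Real.log 2 + ((d + 1 : ℕ) : ℝ) * Real.log 2 := by rw [h6]; ring
        _ ≤ _ := by gcongr
  have hfinal := numeric_bound hk hkey
  have hcast : ((k + 1 : ℕ) : ℝ) - 1 = k := by push_cast; ring
  rw [hcast]
  exact (Nat.cast_le.mpr hcard).trans hfinal
end
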